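/- In a Floquet code, if the stabilizer group gains k new independent generators during cycle j+1 compared to cycle j (i.e., dim⟨S_{j+1}^{(0)}⟩ − dim⟨S_j^{(0)}⟩ = k), then at most k new independent generators can be added in cycle j+2; moreover, the dimension can only increase at measurement m_i in cycle j+1 if it also increased at measurement m_i in cycle j. -/

import Mathlib

abbrev PauliVec (n : ℕ) := (Fin n → ZMod 2) × (Fin n → ZMod 2)

def sympl {n : ℕ} (v w : PauliVec n) : ZMod 2 :=
  ∑ i, (v.1 i * w.2 i + v.2 i * w.1 i)

/-- The symplectic product with a fixed `m`, as a linear map. -/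
def symplMap {n : ℕ} (m : PauliVec n) : PauliVec n →ₗ[ZMod 2] ZMod 2 where
  toFun v := sympl v m
  map_add' v w := by
    simp only [sympl, Prod.fst_add, Prod.snd_add, Pi.add_apply]
    rw [← Finset.sum_add_distrib]
    exact Finset.sum_congr rfl fun i _ => by ring
  map_smul' c v := by
    simp only [sympl, Prod.smul_fst, Prod.smul_snd, Pi.smul_apply, smul_eq_mul,
      RingHom.id_apply, Finset.mul_sum]
    exact Finset.sum_congr rfl fun i _ => by ring

/-- The symplectic complement of a single Pauli `m` (operators commuting with it). -/
def perp {n : ℕ} (m : PauliVec n) : Submodule (ZMod 2) (PauliVec n) :=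
  LinearMap.ker (symplMap m)

open Submodule in
/-- Update of an instantaneous stabilizer group under measurement of the Pauli `m`:
the commuting part of `S` survives and `m` is adjoined.  This simultaneously
covers all three stabilizer update rules. -/
def measUpdate {n : ℕ} (S : Submodule (ZMod 2) (PauliVec n)) (m : PauliVec n) :
    Submodule (ZMod 2) (PauliVec n) :=
  (S ⊓ perp m) ⊔ span (ZMod 2) {m}

/-- Run a sequence of measurements starting from the stabilizer group `S`. -/
def runSeq {n : ℕ} (ms : List (PauliVec n)) (S : Submodule (ZMod 2) (PauliVec n)) :
    Submodule (ZMod 2) (PauliVec n) :=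
  ms.foldl measUpdate S

/-- The instantaneous stabilizer group after `j` complete cycles of the periodic
measurement sequence `M`, starting from the trivial stabilizer group. -/
def cycISG {n : ℕ} (M : List (PauliVec n)) (j : ℕ) :
    Submodule (ZMod 2) (PauliVec n) :=
  runSeq ((List.replicate j M).flatten) ⊥


/-- The stabilizer group's dimension increases at the `i`-th measurement of
cycle `c` (`c ≥ 1`, cycle `c` applies `M` to the group after `c-1` cycles). -/
def incrAt {n : ℕ} (M : List (PauliVec n)) (c i : ℕ) : Prop :=
  Module.finrank (ZMod 2) ↥(runSeq (M.take i) (cycISG M (c - 1))) =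
    Module.finrank (ZMod 2) ↥(runSeq (M.take (i - 1)) (cycISG M (c - 1))) + 1

def Iso {n : ℕ} (S : Submodule (ZMod 2) (PauliVec n)) : Prop :=
  ∀ v ∈ S, ∀ w ∈ S, sympl v w = 0

lemma sympl_self' {n : ℕ} (v : PauliVec n) : sympl v v = 0 := by
  unfold sympl
  refine Finset.sum_eq_zero fun i _ => ?_
  rw [mul_comm (v.2 i)]
  exact CharTwo.add_self_eq_zero _

lemma sympl_comm' {n : ℕ} (v w : PauliVec n) : sympl v w = sympl w v := by
  unfold sympl
  exact Finset.sum_congr rfl fun i _ => by ring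

lemma mem_perp' {n : ℕ} (v m : PauliVec n) : v ∈ perp m ↔ sympl v m = 0 := Iff.rfl

lemma le_measUpdate_perp {n : ℕ} {S : Submodule (ZMod 2) (PauliVec n)} (m w : PauliVec n)
    (h1 : ∀ v ∈ S ⊓ perp m, sympl v w = 0) (h2 : sympl m w = 0) :
    measUpdate S m ≤ perp w := by
  unfold measUpdate
  refine sup_le (fun v hv => h1 v hv) ?_
  rw [Submodule.span_singleton_le_iff_mem]
  exact h2

lemma Iso.meas {n : ℕ} {S : Submodule (ZMod 2) (PauliVec n)} (hS : Iso S) (m : PauliVec n) :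
    Iso (measUpdate S m) := by
  have hm : measUpdate S m ≤ perp m :=
    le_measUpdate_perp m m (fun v hv => hv.2) (sympl_self' m)
  have hs : ∀ w ∈ S ⊓ perp m, measUpdate S m ≤ perp w := fun w hw =>
    le_measUpdate_perp m w (fun v hv => hS v hv.1 w hw.1) (by rw [sympl_comm']; exact hw.2)
  intro v hv w hw
  have := le_measUpdate_perp (S := S) m v
    (fun u hu => by rw [sympl_comm']; exact hs u hu hv) (by rw [sympl_comm']; exact hm hv) hw
  rw [sympl_comm']
  exact this

lemma meas_mono {n : ℕ} {S T : Submodule (ZMod 2) (PauliVec n)} (h : S ≤ T) (m : PauliVec n) :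
    measUpdate S m ≤ measUpdate T m :=
  sup_le_sup_right (inf_le_inf_right _ h) _

lemma run_mono {n : ℕ} (ms : List (PauliVec n)) : ∀ {S T : Submodule (ZMod 2) (PauliVec n)},
    S ≤ T → runSeq ms S ≤ runSeq ms T := by
  induction ms with
  | nil => exact fun h => h
  | cons m ms ih => exact fun h => ih (meas_mono h m)

lemma Iso.run {n : ℕ} (ms : List (PauliVec n)) : ∀ {S : Submodule (ZMod 2) (PauliVec n)},
    Iso S → Iso (runSeq ms S) := by
  induction ms with
  | nil => exact fun h => h
  | cons m ms ih => exact fun h => ih (h.meas m)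

lemma finrank_adj {n : ℕ} {S : Submodule (ZMod 2) (PauliVec n)} {m : PauliVec n} (h : m ∉ S) :
    Module.finrank (ZMod 2) ↥(S ⊔ Submodule.span (ZMod 2) {m}) =
      Module.finrank (ZMod 2) ↥S + 1 := by
  have h0 : m ≠ 0 := fun e => h (e ▸ S.zero_mem)
  have h1 := Submodule.finrank_sup_add_finrank_inf_eq S (Submodule.span (ZMod 2) {m})
  have h2 : S ⊓ Submodule.span (ZMod 2) {m} = ⊥ :=
    disjoint_iff.mp ((Submodule.disjoint_span_singleton' h0).mpr h)
  rw [h2, finrank_bot, finrank_span_singleton h0] at h1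
  exact h1

open Classical in
lemma finrank_meas {n : ℕ} {S : Submodule (ZMod 2) (PauliVec n)} (hS : Iso S)
    (m : PauliVec n) :
    Module.finrank (ZMod 2) ↥(measUpdate S m) =
      Module.finrank (ZMod 2) ↥S + if S ≤ perp m ∧ m ∉ S then 1 else 0 := by
  unfold measUpdate
  by_cases hp : S ≤ perp m
  · rw [inf_eq_left.mpr hp]
    by_cases hm : m ∈ S
    · rw [sup_eq_left.mpr ((Submodule.span_singleton_le_iff_mem _ _).mpr hm)]
      simp [hm]
    · rw [finrank_adj hm]
      simp [hm, hp]
  · have hm : m ∉ S := fun hm => hp fun v hv => hS v hv m hm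
    have hm2 : m ∉ S ⊓ perp m := fun h => hm h.1
    rw [finrank_adj hm2]
    obtain ⟨s, hs, hsp⟩ := SetLike.not_le_iff_exists.mp hp
    have key : (S ⊓ perp m) ⊔ Submodule.span (ZMod 2) {s} = S := by
      apply le_antisymm
      · exact sup_le inf_le_left ((Submodule.span_singleton_le_iff_mem _ _).mpr hs)
      · intro v hv
        by_cases hvp : v ∈ perp m
        · exact Submodule.mem_sup_left ⟨hv, hvp⟩
        · have one : ∀ x : ZMod 2, x ≠ 0 → x = 1 := by decide
          have e1 : symplMap m v = 1 := one _ hvp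
          have e2 : symplMap m s = 1 := one _ hsp
          have : v - s ∈ perp m := by
            change symplMap m (v - s) = 0
            rw [map_sub, e1, e2, sub_self]
          rw [← sub_add_cancel v s]
          exact Submodule.add_mem_sup ⟨S.sub_mem hv hs, this⟩
            (Submodule.mem_span_singleton_self s)
    have := finrank_adj (S := S ⊓ perp m) (m := s) (fun h => hsp h.2)
    rw [key] at this
    simp [hp, this]

lemma run_growth {n : ℕ} (ms : List (PauliVec n)) :
    ∀ {S T : Submodule (ZMod 2) (PauliVec n)}, S ≤ T → Iso S → Iso T →
    Module.finrank (ZMod 2) ↥(runSeq ms T) + Module.finrank (ZMod 2) ↥S ≤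
      Module.finrank (ZMod 2) ↥(runSeq ms S) + Module.finrank (ZMod 2) ↥T := by
  induction ms with
  | nil => intro S T _ _ _; exact (add_comm _ _).le
  | cons m ms ih =>
    intro S T h hS hT
    have h1 := ih (meas_mono h m) (hS.meas m) (hT.meas m)
    have h2 := finrank_meas hS m
    have h3 := finrank_meas hT m
    change Module.finrank (ZMod 2) ↥(runSeq ms (measUpdate T m)) + _ ≤
      Module.finrank (ZMod 2) ↥(runSeq ms (measUpdate S m)) + _
    by_cases c : T ≤ perp m ∧ m ∉ T
    · have c' : S ≤ perp m ∧ m ∉ S := ⟨h.trans c.1, fun hm => c.2 (h hm)⟩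
      rw [if_pos c] at h3
      rw [if_pos c'] at h2
      omega
    · rw [if_neg c] at h3
      split_ifs at h2 <;> omega

lemma run_append {n : ℕ} (a b : List (PauliVec n)) (S : Submodule (ZMod 2) (PauliVec n)) :
    runSeq (a ++ b) S = runSeq b (runSeq a S) := by
  simp [runSeq, List.foldl_append]

lemma cyc_succ {n : ℕ} (M : List (PauliVec n)) (j : ℕ) :
    cycISG M (j + 1) = runSeq M (cycISG M j) := by
  unfold cycISG
  rw [List.replicate_succ', List.flatten_append, run_append]
  simp

lemma cyc_le {n : ℕ} (M : List (PauliVec n)) (j : ℕ) : cycISG M j ≤ cycISG M (j + 1) := by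
  induction j with
  | zero => exact bot_le
  | succ j ih =>
    rw [cyc_succ M j, cyc_succ M (j + 1)]
    exact run_mono M ih

lemma cyc_iso {n : ℕ} (M : List (PauliVec n)) (j : ℕ) : Iso (cycISG M j) := by
  refine Iso.run _ ?_
  intro v hv w hw
  rw [(Submodule.mem_bot _).mp hv]
  simp [sympl]

/-- if the stabilizer group of a Floquet code gains `k` new
independent generators during a cycle, then at most `k` new independent
generators can be added in the next cycle; moreover the dimension can only
increase at measurement `m_i` of a cycle if it also increased at `m_i` in the
previous cycle. -/
theorem floquet_growth_bound {n : ℕ} (M : List (PauliVec n)) (j k : ℕ)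
    (h : Module.finrank (ZMod 2) ↥(cycISG M (j + 1)) =
      Module.finrank (ZMod 2) ↥(cycISG M j) + k) :
    Module.finrank (ZMod 2) ↥(cycISG M (j + 2)) ≤
      Module.finrank (ZMod 2) ↥(cycISG M (j + 1)) + k ∧
    (∀ c i, 1 ≤ c → 1 ≤ i → i ≤ M.length → incrAt M (c + 1) i → incrAt M c i) := by
  refine ⟨?_, ?_⟩
  · have := run_growth M (cyc_le M j) (cyc_iso M j) (cyc_iso M (j + 1))
    rw [← cyc_succ, ← cyc_succ] at this
    change _ + _ ≤ _ + _ at this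
    have e : j + 1 + 1 = j + 2 := rfl
    rw [e] at this
    omega
  · intro c i hc hi hl hinc
    obtain ⟨c, rfl⟩ : ∃ d, c = d + 1 := ⟨c - 1, by omega⟩
    obtain ⟨i, rfl⟩ : ∃ d, i = d + 1 := ⟨i - 1, by omega⟩
    unfold incrAt at hinc ⊢
    change Module.finrank (ZMod 2) ↥(runSeq (M.take (i + 1)) (cycISG M (c + 1))) =
      Module.finrank (ZMod 2) ↥(runSeq (M.take i) (cycISG M (c + 1))) + 1 at hinc
    change Module.finrank (ZMod 2) ↥(runSeq (M.take (i + 1)) (cycISG M c)) =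
      Module.finrank (ZMod 2) ↥(runSeq (M.take i) (cycISG M c)) + 1
    have ht : M.take (i + 1) = M.take i ++ [M[i]] := by
      rw [List.take_concat_get']
    rw [ht, run_append] at hinc ⊢
    change Module.finrank (ZMod 2) ↥(measUpdate _ _) = _ at hinc
    change Module.finrank (ZMod 2) ↥(measUpdate _ _) = _
    have hle := run_mono (M.take i) (cyc_le M c)
    rw [finrank_meas ((cyc_iso M _).run _)] at hinc ⊢
    split_ifs at hinc with q
    · rw [if_pos ⟨hle.trans q.1, fun hm => q.2 (hle hm)⟩]
    · omega
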